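/- Let p be a prime, n ≥ 2 an integer, q a power of p, and F a finite field with q^n elements. For a divisor d of n, the elements of F satisfying x^{q^d} = x form the subfield of F with q^d elements. Then the maximum of the orders |H| over all subgroups H of the multiplicative group F^× such that, for every divisor d of n with d < n, H intersects {x ∈ F^× : x^{q^d} = x} only in {1}, equals Φ*_n(q); moreover this maximum is attained by a unique subgroup. -/

import Mathlib

/-- `Phi n q` is the `n`-th cyclotomic polynomial evaluated at `q`. -/
noncomputable def Phi (n q : ℕ) : ℕ :=
  ((Polynomial.cyclotomic n ℤ).eval (q : ℤ)).toNat

/-- `PhiStar n q` is the largest divisor of `Phi n q` that is coprime to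
`∏_{k=1}^{n-1} (q^k - 1)` (an empty product is `1`). -/
noncomputable def PhiStar (n q : ℕ) : ℕ :=
  sSup {m : ℕ | m ∣ Phi n q ∧ Nat.Coprime m (∏ k ∈ Finset.Ico 1 n, (q ^ k - 1))}

/-!
A finite group has order prime to `k` exactly when `x ^ k = 1` forces `x = 1` in it. Hence `H ≤ Fˣ`
meets the subfield with `q ^ d` elements only in `1` exactly when `|H|` is coprime to `q ^ d - 1`.
Since `gcd (q ^ k - 1, q ^ n - 1) = q ^ gcd (k, n) - 1`, a divisor of `q ^ n - 1` coprime to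
`q ^ d - 1` for all proper divisors `d` of `n` is coprime to `q ^ k - 1` for all `0 < k < n`, and
then it divides `Φ_n(q)`, the only factor left in `q ^ n - 1 = ∏_{d ∣ n} Φ_d(q)`. A cyclic group has
exactly one subgroup of each order dividing its own.
-/

section CyclotomicValue

variable {m n q : ℕ}

lemma natCast_phi (n : ℕ) (hq : 1 ≤ q) :
    (Phi n q : ℤ) = (Polynomial.cyclotomic n ℤ).eval (q : ℤ) :=
  Int.toNat_of_nonneg (Polynomial.cyclotomic_nonneg n (by exact_mod_cast hq))

lemma phi_pos (n : ℕ) (hq : 1 < q) : 0 < Phi n q :=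
  Int.pos_iff_toNat_pos.mp (Polynomial.cyclotomic_pos' n (by exact_mod_cast hq))

lemma prod_divisors_phi (hn : 0 < n) (hq : 1 ≤ q) :
    ∏ d ∈ n.divisors, Phi d q = q ^ n - 1 := by
  zify [Nat.one_le_pow n q hq]
  simp only [natCast_phi _ hq, ← Polynomial.eval_prod,
    Polynomial.prod_cyclotomic_eq_X_pow_sub_one hn, Polynomial.eval_sub, Polynomial.eval_pow,
    Polynomial.eval_X, Polynomial.eval_one]

lemma phi_dvd_pow_sub_one (hn : 0 < n) (hq : 1 ≤ q) : Phi n q ∣ q ^ n - 1 := by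
  rw [← prod_divisors_phi hn hq]
  exact Finset.dvd_prod_of_mem _ (Nat.mem_divisors_self n hn.ne')

lemma dvd_phi_of_dvd_pow_sub_one (hn : 0 < n) (hq : 1 ≤ q) (hm : m ∣ q ^ n - 1)
    (hcop : ∀ d ∈ n.properDivisors, m.Coprime (q ^ d - 1)) : m ∣ Phi n q := by
  rw [← prod_divisors_phi hn hq, ← Nat.cons_self_properDivisors hn.ne', Finset.prod_cons] at hm
  refine Nat.Coprime.dvd_of_dvd_mul_right (Nat.Coprime.prod_right fun d hd ↦ ?_) hm
  exact (hcop d hd).coprime_dvd_right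
    (phi_dvd_pow_sub_one (Nat.pos_of_mem_properDivisors hd) hq)

lemma coprime_prod_pow_sub_one_iff (hm : m ∣ q ^ n - 1) :
    m.Coprime (∏ k ∈ Finset.Ico 1 n, (q ^ k - 1)) ↔
      ∀ d ∈ n.properDivisors, m.Coprime (q ^ d - 1) := by
  rw [Nat.coprime_prod_right_iff]
  refine ⟨fun h d hd ↦ h d (Finset.mem_of_mem_filter d hd), fun h k hk ↦ ?_⟩
  obtain ⟨hk₀, hkn⟩ := Finset.mem_Ico.mp hk
  have hgcd : k.gcd n ∈ n.properDivisors :=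
    Nat.mem_properDivisors.mpr ⟨k.gcd_dvd_right n, (Nat.gcd_le_left n hk₀).trans_lt hkn⟩
  have hcop : m.Coprime ((q ^ k - 1).gcd (q ^ n - 1)) := by
    rw [Nat.pow_sub_one_gcd_pow_sub_one]
    exact h _ hgcd
  exact Nat.eq_one_of_dvd_coprimes hcop (Nat.gcd_dvd_left _ _)
    (Nat.dvd_gcd (Nat.gcd_dvd_right _ _) ((Nat.gcd_dvd_left _ _).trans hm))

lemma dvd_phi_and_coprime_iff (hn : 0 < n) (hq : 1 ≤ q) :
    m ∣ Phi n q ∧ m.Coprime (∏ k ∈ Finset.Ico 1 n, (q ^ k - 1)) ↔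
      m ∣ q ^ n - 1 ∧ ∀ d ∈ n.properDivisors, m.Coprime (q ^ d - 1) := by
  constructor
  · rintro ⟨hm, hcop⟩
    have hm' := hm.trans (phi_dvd_pow_sub_one hn hq)
    exact ⟨hm', (coprime_prod_pow_sub_one_iff hm').mp hcop⟩
  · rintro ⟨hm, hcop⟩
    exact ⟨dvd_phi_of_dvd_pow_sub_one hn hq hm hcop, (coprime_prod_pow_sub_one_iff hm).mpr hcop⟩

lemma isGreatest_phiStar (hn : 0 < n) (hq : 1 < q) :
    IsGreatest {m | m ∣ q ^ n - 1 ∧ ∀ d ∈ n.properDivisors, m.Coprime (q ^ d - 1)}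
      (PhiStar n q) := by
  simp only [← dvd_phi_and_coprime_iff hn hq.le]
  have hbdd : BddAbove {m | m ∣ Phi n q ∧ m.Coprime (∏ k ∈ Finset.Ico 1 n, (q ^ k - 1))} :=
    ⟨Phi n q, fun _ hm ↦ Nat.le_of_dvd (phi_pos n hq) hm.1⟩
  exact ⟨Nat.sSup_mem ⟨1, one_dvd _, Nat.coprime_one_left _⟩ hbdd, fun _ hm ↦ le_csSup hbdd hm⟩

end CyclotomicValue

section FiniteGroup

variable {G : Type*}

lemma coprime_card_iff_forall_pow_eq_one [Group G] [Finite G] {k : ℕ} :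
    (Nat.card G).Coprime k ↔ ∀ x : G, x ^ k = 1 → x = 1 := by
  refine ⟨fun h x hx ↦ h.pow_left_bijective.injective (by simpa using hx), fun h ↦ ?_⟩
  refine Nat.coprime_of_dvd fun r hr hrG hrk ↦ ?_
  have : Fact r.Prime := ⟨hr⟩
  obtain ⟨x, hx⟩ := exists_prime_orderOf_dvd_card' (G := G) r hrG
  have hx₁ : x = 1 := h x (orderOf_dvd_iff_pow_eq_one.mp (hx ▸ hrk))
  exact hr.ne_one (hx ▸ orderOf_eq_one_iff.mpr hx₁)

lemma coprime_card_sub_one_iff_forall_pow_eq_self [Group G] {H : Subgroup G} [Finite H] {k : ℕ}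
    (hk : k ≠ 0) : (Nat.card H).Coprime (k - 1) ↔ ∀ x ∈ H, x ^ k = x → x = 1 := by
  have hpow (x : G) : x ^ (k - 1) = 1 ↔ x ^ k = x := by
    rw [← mul_eq_right (b := x), pow_sub_one_mul hk]
  simp only [coprime_card_iff_forall_pow_eq_one, Subtype.forall, Subgroup.mk_eq_one,
    SubmonoidClass.mk_pow, hpow]

lemma existsUnique_subgroup_card_eq [CommGroup G] [IsCyclic G] [Finite G] {m : ℕ}
    (hm : m ∣ Nat.card G) : ∃! H : Subgroup G, Nat.card H = m := by
  have hker : Nat.card (powMonoidHom m : G →* G).ker = m := by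
    rw [IsCyclic.card_powMonoidHom_ker, Nat.gcd_eq_right hm]
  refine ⟨_, hker, fun H hH ↦ Subgroup.eq_of_le_of_card_ge (fun x hx ↦ ?_) ?_⟩
  · have hxm : orderOf x ∣ m := hH ▸ H.orderOf_dvd_natCard hx
    exact MonoidHom.mem_ker.mpr (orderOf_dvd_iff_pow_eq_one.mp hxm)
  · rw [hker, hH]

theorem phiStar_eq_max_subgroup_card_general [CommGroup G] [IsCyclic G] [Finite G] {q n : ℕ}
    (hG : Nat.card G = q ^ n - 1) :
    IsGreatest {m : ℕ | ∃ H : Subgroup G, Nat.card H = m ∧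
        ∀ d : ℕ, d ∣ n → d < n → ∀ x ∈ H, x ^ q ^ d = x → x = 1}
      (PhiStar n q) ∧
    ∃! H : Subgroup G,
      (∀ d : ℕ, d ∣ n → d < n → ∀ x ∈ H, x ^ q ^ d = x → x = 1) ∧
      Nat.card H = PhiStar n q := by
  have hqn : 1 < q ^ n := by
    have := Nat.card_pos (α := G)
    omega
  have hn : 0 < n := Nat.pos_of_ne_zero fun h ↦ by simp [h] at hqn
  have hq : 1 < q := (one_lt_pow_iff hn.ne').mp hqn
  obtain ⟨⟨hdvd, hcop⟩, hmax⟩ := isGreatest_phiStar hn hq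
  have htriv (H : Subgroup G) :
      (∀ d : ℕ, d ∣ n → d < n → ∀ x ∈ H, x ^ q ^ d = x → x = 1) ↔
        ∀ d ∈ n.properDivisors, (Nat.card H).Coprime (q ^ d - 1) := by
    simp only [Nat.mem_properDivisors, and_imp,
      coprime_card_sub_one_iff_forall_pow_eq_self (pow_ne_zero _ (Nat.ne_zero_of_lt hq))]
  simp only [htriv]
  obtain ⟨H, hH, hunique⟩ := existsUnique_subgroup_card_eq (hG ▸ hdvd)
  refine ⟨⟨⟨H, hH, hH ▸ hcop⟩, ?_⟩, H, ⟨hH ▸ hcop, hH⟩, fun K hK ↦ hunique K hK.2⟩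
  rintro _ ⟨K, rfl, hK⟩
  exact hmax ⟨hG ▸ K.card_subgroup_dvd_card, hK⟩

end FiniteGroup

/-- Remark 6: for a prime power `q` and finite field `F` with `q^n` elements,
`Φ*_n(q)` is the maximal order of a subgroup of `F^×` meeting each proper
subfield's multiplicative group `{x : x^{q^d} = x}` (for `d ∣ n`, `d < n`)
trivially, and a unique subgroup attains this maximum. -/
theorem phiStar_eq_max_subgroup_card (p q n : ℕ) (hp : p.Prime)
    (hq : ∃ e : ℕ, 0 < e ∧ q = p ^ e) (hn : 2 ≤ n)
    (F : Type*) [Field F] [Fintype F] (hF : Fintype.card F = q ^ n) :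
    IsGreatest {m : ℕ | ∃ H : Subgroup Fˣ, Nat.card H = m ∧
        ∀ d : ℕ, d ∣ n → d < n → ∀ x ∈ H, ((x : F) ^ q ^ d = (x : F)) → x = 1}
      (PhiStar n q) ∧
    ∃! H : Subgroup Fˣ,
      (∀ d : ℕ, d ∣ n → d < n → ∀ x ∈ H, ((x : F) ^ q ^ d = (x : F)) → x = 1) ∧
      Nat.card H = PhiStar n q := by
  simpa only [← Units.val_pow_eq_pow_val, Units.val_inj] using
    phiStar_eq_max_subgroup_card_general (G := Fˣ)
      (by rw [Nat.card_units, Nat.card_eq_fintype_card, hF])
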